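/- Let n ≥ 1 and m ≥ 1 be integers and let r_c be an integer with r_c ≥ 36·(n + (n·ln n)/m). If each of m collectors independently draws r_c coupons i.i.d. uniformly at random from n coupon types, then with probability at least 1 − e^{−4m − 3·ln n}, for every coupon type α fewer than ⌈m/3⌉ collectors obtain at most 1 copy of α (i.e., for every coupon type, more than m − ⌈m/3⌉ collectors hold at least 2 copies). -/

import Mathlib

/-!
The proof is a Chernoff bound for the number of deficient collectors, followed by a union bound
over the `n` coupon types.

Fix a type `α`, put `y = 1 + ln n / m`, and let `X v` be the number of copies of `α` held by
collector `v`. Give each collector the weight `1 + 2 e^{15 y} 2^{-X v}`. It is at least `1` always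
and at least `e^{15 y}` when `X v ≤ 1`, so if at least `m / 3` collectors are deficient then the
product of the weights is at least `e^{5 y m} = e^{5 m + 5 ln n}`. The sum of this product over all
outcomes factors over collectors, and `2^{-X v}` factors over draws, so it equals
`(n^r + 2 e^{15 y} (n - 1/2)^r)^m`. Since `(1 - 1/(2n))^r ≤ e^{-r/(2n)} ≤ e^{-18 y}`, this is at
most `(e n^r)^m`. By Markov's inequality a fixed type fails with probability at most
`e^{-4 m - 5 ln n}`, and summing over the `n = e^{ln n}` types leaves `e^{-4 m - 4 ln n}`.
-/

open Finset

/-- Generating function of the number of copies of `α` in `r` draws from `n` types, evaluated at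
`1/2` and not normalised: each draw contributes `n - 1/2`. -/
lemma sum_half_pow_count (n r : ℕ) (α : Fin n) :
    ∑ g : Fin r → Fin n, (1 / 2 : ℝ) ^ (univ.filter (fun i => g i = α)).card
      = ((n : ℝ) - 1 / 2) ^ r := by
  have h1 : ∀ g : Fin r → Fin n, (1 / 2 : ℝ) ^ (univ.filter (fun i => g i = α)).card
      = ∏ i, (if g i = α then (1 / 2 : ℝ) else 1) := by
    intro g
    rw [Finset.prod_ite]
    simp
  have h2 : ∑ a : Fin n, (if a = α then (1 / 2 : ℝ) else 1) = n - 1 / 2 := by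
    have : ∀ a : Fin n, (if a = α then (1 / 2 : ℝ) else 1)
        = 1 - (if a = α then (1 / 2 : ℝ) else 0) := by
      intro a; split_ifs <;> norm_num
    simp_rw [this]
    rw [Finset.sum_sub_distrib, Finset.sum_ite_eq']
    simp
  simp_rw [h1]
  have := Finset.prod_univ_sum (fun _ : Fin r => (univ : Finset (Fin n)))
    (fun _ a => if a = α then (1 / 2 : ℝ) else 1)
  rw [Fintype.piFinset_univ] at this
  rw [← this, h2]
  simp

/-- Chernoff bound, in counting form, for a single coupon type `α`. -/
lemma card_bad_le (m n r : ℕ) (hm : 1 ≤ m) (hn : 1 ≤ n)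
    (hr : 36 * ((n : ℝ) + (n : ℝ) * Real.log n / m) ≤ r) (α : Fin n) :
    ((univ.filter (fun f : Fin m → Fin r → Fin n =>
        (m : ℝ) / 3 ≤ ((univ.filter (fun v : Fin m =>
          (univ.filter (fun i : Fin r => f v i = α)).card ≤ 1)).card : ℝ))).card : ℝ)
      ≤ ((n : ℝ) ^ r) ^ m * Real.exp (-(4 * (m : ℝ)) - 5 * Real.log n) := by
  have hm0 : (0 : ℝ) < m := by exact_mod_cast hm
  have hn1 : (1 : ℝ) ≤ n := by exact_mod_cast hn
  have hn0 : (0 : ℝ) < n := by linarith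
  have hL : 0 ≤ Real.log n := Real.log_nonneg hn1
  obtain ⟨y, hy⟩ : ∃ y : ℝ, y = 1 + Real.log n / m := ⟨_, rfl⟩
  have hy1 : 1 ≤ y := by
    have : 0 ≤ Real.log n / m := by positivity
    linarith
  have hym : y * m = m + Real.log n := by rw [hy]; field_simp
  have hry : 36 * y ≤ r / n := by
    rw [le_div_iff₀ hn0]
    calc 36 * y * n = 36 * ((n : ℝ) + (n : ℝ) * Real.log n / m) := by rw [hy]; ring
      _ ≤ r := hr
  let X : (Fin r → Fin n) → ℕ := fun g => (univ.filter (fun i => g i = α)).card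
  let w : (Fin r → Fin n) → ℝ := fun g => 1 + 2 * Real.exp (15 * y) * (1 / 2) ^ X g
  have hw1 : ∀ g, 1 ≤ w g := fun g => by
    have : 0 ≤ 2 * Real.exp (15 * y) * (1 / 2) ^ X g := by positivity
    simpa [w] using this
  have hwB : ∀ g, X g ≤ 1 → Real.exp (15 * y) ≤ w g := fun g hg => by
    have h : (1 / 2 : ℝ) ^ 1 ≤ (1 / 2) ^ X g :=
      pow_le_pow_of_le_one (by norm_num) (by norm_num) hg
    have := mul_le_mul_of_nonneg_left h (by positivity : 0 ≤ 2 * Real.exp (15 * y))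
    simp only [w]
    linarith
  have hsumw : ∑ g, w g ≤ (n : ℝ) ^ r * Real.exp 1 := by
    have hpow : ((n : ℝ) - 1 / 2) ^ r ≤ (n : ℝ) ^ r * Real.exp (-(18 * y)) := by
      have hb : (n : ℝ) - 1 / 2 ≤ n * Real.exp (-(1 / (2 * n))) := by
        have h := Real.add_one_le_exp (-(1 / (2 * (n : ℝ))))
        calc (n : ℝ) - 1 / 2 = n * (-(1 / (2 * (n : ℝ))) + 1) := by field_simp; ring
          _ ≤ _ := by gcongr
      calc ((n : ℝ) - 1 / 2) ^ r ≤ (n * Real.exp (-(1 / (2 * n)))) ^ r :=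
            pow_le_pow_left₀ (by linarith) hb r
        _ = (n : ℝ) ^ r * Real.exp (-(r / n / 2)) := by
            rw [mul_pow, ← Real.exp_nat_mul]
            congr 2
            field_simp
        _ ≤ _ := by gcongr; linarith
    have hexp : 2 * Real.exp (-(3 * y)) ≤ 1 := by
      have h := Real.add_one_le_exp (3 * y)
      rw [Real.exp_neg, ← div_eq_mul_inv, div_le_one (Real.exp_pos _)]
      linarith
    have he : (2 : ℝ) ≤ Real.exp 1 := by
      have := Real.add_one_le_exp (1 : ℝ)
      linarith
    calc ∑ g, w g = (n : ℝ) ^ r + 2 * Real.exp (15 * y) * ((n : ℝ) - 1 / 2) ^ r := by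
          simp only [w, X]
          rw [Finset.sum_add_distrib, ← Finset.mul_sum, sum_half_pow_count]
          simp
      _ ≤ (n : ℝ) ^ r + 2 * Real.exp (15 * y) * ((n : ℝ) ^ r * Real.exp (-(18 * y))) := by
          gcongr
      _ = (n : ℝ) ^ r * (1 + 2 * Real.exp (-(3 * y))) := by
          have : Real.exp (-(3 * y)) = Real.exp (15 * y) * Real.exp (-(18 * y)) := by
            rw [← Real.exp_add]; congr 1; ring
          rw [this]; ring
      _ ≤ _ := by gcongr; linarith
  have hprod : ∑ f : Fin m → Fin r → Fin n, ∏ v, w (f v) ≤ ((n : ℝ) ^ r * Real.exp 1) ^ m := by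
    have := Finset.prod_univ_sum (fun _ : Fin m => (univ : Finset (Fin r → Fin n)))
      (fun _ g => w g)
    rw [Fintype.piFinset_univ] at this
    rw [← this]
    simp only [Finset.prod_const, Finset.card_univ, Fintype.card_fin]
    exact pow_le_pow_left₀ (Finset.sum_nonneg fun g _ => by linarith [hw1 g]) hsumw m
  have hbad : ∀ f : Fin m → Fin r → Fin n,
      (m : ℝ) / 3 ≤ ((univ.filter (fun v => X (f v) ≤ 1)).card : ℝ) →
      Real.exp (5 * m + 5 * Real.log n) ≤ ∏ v, w (f v) := by
    intro f hf
    calc Real.exp (5 * m + 5 * Real.log n)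
        ≤ Real.exp ((univ.filter (fun v => X (f v) ≤ 1)).card * (15 * y)) := by
          apply Real.exp_le_exp.mpr
          have := mul_le_mul_of_nonneg_right hf (by linarith : 0 ≤ 15 * y)
          linarith
      _ = ∏ v ∈ univ.filter (fun v => X (f v) ≤ 1), Real.exp (15 * y) := by
          rw [Real.exp_nat_mul, Finset.prod_const]
      _ = ∏ v, (if X (f v) ≤ 1 then Real.exp (15 * y) else 1) := Finset.prod_filter _ _
      _ ≤ ∏ v, w (f v) := by
          refine Finset.prod_le_prod (fun v _ => ?_) fun v _ => ?_
          · split_ifs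
            · exact (Real.exp_pos _).le
            · exact zero_le_one
          · split_ifs with h
            · exact hwB _ h
            · exact hw1 _
  have hmarkov : ((univ.filter (fun f : Fin m → Fin r → Fin n =>
        (m : ℝ) / 3 ≤ ((univ.filter (fun v => X (f v) ≤ 1)).card : ℝ))).card : ℝ)
      * Real.exp (5 * m + 5 * Real.log n) ≤ ((n : ℝ) ^ r * Real.exp 1) ^ m := by
    refine le_trans ?_ hprod
    rw [← nsmul_eq_mul, ← Finset.sum_const, Finset.sum_filter]
    refine Finset.sum_le_sum fun f _ => ?_
    split_ifs with h
    · exact hbad f h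
    · exact Finset.prod_nonneg fun v _ => by linarith [hw1 (f v)]
  rw [← le_div_iff₀ (Real.exp_pos _)] at hmarkov
  refine hmarkov.trans (le_of_eq ?_)
  rw [mul_pow, mul_div_assoc, ← Real.exp_nat_mul, ← Real.exp_sub]
  congr 2
  ring

/-- **Successful collection phase.**
`m ≥ 1` collectors each draw `r_c` coupons i.i.d. uniformly from `n ≥ 1` types
(uniform measure on `Fin m → Fin r_c → Fin n`, probabilities as counting
ratios).  If `r_c ≥ 36 (n + n ln n / m)`, then with probability at least
`1 - e^{-4m - 3 ln n}`, for every coupon type `α` fewer than `⌈m/3⌉` collectors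
(equivalently, fewer than `m/3`, as the count is an integer) obtain at most one
copy of `α`. -/
theorem successful_collection_phase
    (m n r_c : ℕ) (hm : 1 ≤ m) (hn : 1 ≤ n)
    (hrc : 36 * ((n : ℝ) + (n : ℝ) * Real.log n / m) ≤ r_c) :
    1 - Real.exp (-(4 * (m : ℝ)) - 3 * Real.log n) ≤
      ((univ.filter (fun f : Fin m → Fin r_c → Fin n =>
          ∀ α : Fin n, ((univ.filter (fun v : Fin m =>
            (univ.filter (fun i : Fin r_c => f v i = α)).card ≤ 1)).card : ℝ) <
              (m : ℝ) / 3)).card : ℝ) /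
        (Fintype.card (Fin m → Fin r_c → Fin n) : ℝ) := by
  have hn1 : (1 : ℝ) ≤ n := by exact_mod_cast hn
  have hn0 : (0 : ℝ) < n := by linarith
  have hL : 0 ≤ Real.log n := Real.log_nonneg hn1
  have hN : (Fintype.card (Fin m → Fin r_c → Fin n) : ℝ) = ((n : ℝ) ^ r_c) ^ m := by simp
  have hN0 : (0 : ℝ) < ((n : ℝ) ^ r_c) ^ m := by positivity
  let D : (Fin m → Fin r_c → Fin n) → Fin n → ℝ := fun f α =>
    ((univ.filter (fun v : Fin m => (univ.filter (fun i : Fin r_c => f v i = α)).card ≤ 1)).card : ℝ)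
  have hunion : ((univ.filter (fun f => ¬ ∀ α, D f α < (m : ℝ) / 3)).card : ℝ)
      ≤ ((n : ℝ) ^ r_c) ^ m * Real.exp (-(4 * (m : ℝ)) - 3 * Real.log n) := by
    have hsub : univ.filter (fun f => ¬ ∀ α, D f α < (m : ℝ) / 3)
        ⊆ univ.biUnion (fun α => univ.filter (fun f => (m : ℝ) / 3 ≤ D f α)) := by
      intro f hf
      simpa using hf
    calc ((univ.filter (fun f => ¬ ∀ α, D f α < (m : ℝ) / 3)).card : ℝ)
        ≤ ∑ α : Fin n, ((univ.filter (fun f => (m : ℝ) / 3 ≤ D f α)).card : ℝ) := by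
          exact_mod_cast (Finset.card_le_card hsub).trans Finset.card_biUnion_le
      _ ≤ ∑ _α : Fin n, ((n : ℝ) ^ r_c) ^ m * Real.exp (-(4 * (m : ℝ)) - 5 * Real.log n) :=
          Finset.sum_le_sum fun α _ => card_bad_le m n r_c hm hn hrc α
      _ = ((n : ℝ) ^ r_c) ^ m * Real.exp (-(4 * (m : ℝ)) - 4 * Real.log n) := by
          have : Real.exp (-(4 * (m : ℝ)) - 4 * Real.log n)
              = n * Real.exp (-(4 * (m : ℝ)) - 5 * Real.log n) := by
            nth_rewrite 2 [← Real.exp_log hn0]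
            rw [← Real.exp_add]
            congr 1
            ring
          rw [this]
          simp
          ring
      _ ≤ _ := by gcongr; norm_num
  have hsplit : ((univ.filter (fun f => ∀ α, D f α < (m : ℝ) / 3)).card : ℝ)
      + ((univ.filter (fun f => ¬ ∀ α, D f α < (m : ℝ) / 3)).card : ℝ)
      = ((n : ℝ) ^ r_c) ^ m := by
    rw [← hN, ← Finset.card_univ]
    exact_mod_cast Finset.card_filter_add_card_filter_not (s := univ)
      (fun f => ∀ α, D f α < (m : ℝ) / 3)
  rw [hN, le_div_iff₀ hN0]
  simp only [D] at hsplit hunion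
  linarith
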